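/- (Generalized quantum Capelli identity, symmetric form.) Let R be a skew-invertible Hecke symmetry with parameter q such that j_q ≠ 0 for 2 ≤ j ≤ k, let M and D be N×N matrices with entries in a unital associative ℂ-algebra 𝒜 satisfying the Reflection Equation R M₁ R M₁ = M₁ R M₁ R, the relation R⁻¹ D₁ R⁻¹ D₁ = D₁ R⁻¹ D₁ R⁻¹, and the permutation relations D₁ R M₁ = R M₁ R⁻¹ D₁ R⁻¹ + I, and set L := M D. Then for every k ≥ 1, as an identity in 𝒜: ⟨S^(k) L_{1̄} (L_{2̄} − q⁻¹·I) ⋯ (L_{k̄} − q^{−(k−1)}·(k−1)_q·I)⟩_{1…k} = q^{−k(k−1)} ⟨S^(k) M_{1̄} ⋯ M_{k̄} D_{k̄} ⋯ D_{1̄}⟩_{1…k}. -/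

import Mathlib

open Matrix BigOperators

noncomputable section

/-- An `N² × N²` complex matrix, viewed as an operator on `ℂ^N ⊗ ℂ^N`. -/
abbrev RMat (N : ℕ) := Matrix (Fin N × Fin N) (Fin N × Fin N) ℂ

/-- A matrix on the `k`-th tensor power of `ℂ^N`, with entries in `A`. -/
abbrev TMat (N k : ℕ) (A : Type _) := Matrix (Fin k → Fin N) (Fin k → Fin N) A

/-- The `q`-number `j_q = (q^j - q^{-j})/(q - q^{-1})`. -/
def qNum (q : ℂ) (j : ℕ) : ℂ := (q ^ j - q⁻¹ ^ j) / (q - q⁻¹)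

/-- Embedding of an `N²×N²` matrix `R` into the `k`-th tensor power,
acting in the (0-based) tensor factors `i` and `i+1`.  The paper's `R_i`
(1-based) is `embR k R (i-1)`. -/
def embR {N : ℕ} (k : ℕ) (R : RMat N) (i : ℕ) : TMat N k ℂ := fun f g =>
  if h : i + 1 < k then
    if ∀ j : Fin k, j.val ≠ i → j.val ≠ i + 1 → f j = g j then
      R (f ⟨i, Nat.lt_of_succ_lt h⟩, f ⟨i + 1, h⟩) (g ⟨i, Nat.lt_of_succ_lt h⟩, g ⟨i + 1, h⟩)
    else 0
  else (1 : TMat N k ℂ) f g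

/-- `X ⊗ I^{⊗(k-1)}` : the first copy `X_{1̄}` of an `N×N` matrix over `A`. -/
def emb1 {N : ℕ} (k : ℕ) {A : Type _} [Ring A] (X : Matrix (Fin N) (Fin N) A) :
    TMat N k A := fun f g =>
  if h : 0 < k then
    if ∀ j : Fin k, j.val ≠ 0 → f j = g j then X (f ⟨0, h⟩) (g ⟨0, h⟩) else 0
  else (1 : TMat N k A) f g

/-- Lift a complex matrix to a matrix over the `ℂ`-algebra `A`. -/
def liftC {N k : ℕ} (A : Type _) [Ring A] [Algebra ℂ A] (X : TMat N k ℂ) : TMat N k A :=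
  X.map (algebraMap ℂ A)

/-- The copies `X_{1̄}, X_{2̄}, …` of `X` in the `k`-th tensor power:
`copyX k R Rinv X i` is the paper's `X_{\overline{i+1}}`, i.e.
`X_{1̄} = X ⊗ I^{⊗(k-1)}` and `X_{\overline{i+1}} = R_i X_{ī} R_i⁻¹`. -/
def copyX {N : ℕ} (k : ℕ) (R Rinv : RMat N) {A : Type _} [Ring A] [Algebra ℂ A]
    (X : Matrix (Fin N) (Fin N) A) : ℕ → TMat N k A
  | 0 => emb1 k X
  | i + 1 => liftC A (embR k R i) * copyX k R Rinv X i * liftC A (embR k Rinv i)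

/-- The `R`-skew-symmetrizers, on the ambient `k`-th tensor power:
`Asym k R q j` is `A^{(j)}` (acting in the first `j` factors). -/
def Asym {N : ℕ} (k : ℕ) (R : RMat N) (q : ℂ) : ℕ → TMat N k ℂ
  | 0 => 1
  | 1 => 1
  | j + 2 =>
      (qNum q (j + 2))⁻¹ •
        (Asym k R q (j + 1) *
          ((q ^ (j + 1)) • (1 : TMat N k ℂ) - (qNum q (j + 1)) • embR k R j) *
          Asym k R q (j + 1))

/-- The `R`-symmetrizers, on the ambient `k`-th tensor power:
`Ssym k R q j` is `S^{(j)}` (acting in the first `j` factors). -/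
def Ssym {N : ℕ} (k : ℕ) (R : RMat N) (q : ℂ) : ℕ → TMat N k ℂ
  | 0 => 1
  | 1 => 1
  | j + 2 =>
      (qNum q (j + 2))⁻¹ •
        (Ssym k R q (j + 1) *
          ((q⁻¹ ^ (j + 1)) • (1 : TMat N k ℂ) + (qNum q (j + 1)) • embR k R j) *
          Ssym k R q (j + 1))

/-- The braid relation `R₁₂ R₂₃ R₁₂ = R₂₃ R₁₂ R₂₃` on `(ℂ^N)^{⊗3}`. -/
def IsBraiding {N : ℕ} (R : RMat N) : Prop :=
  embR 3 R 0 * embR 3 R 1 * embR 3 R 0 = embR 3 R 1 * embR 3 R 0 * embR 3 R 1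

/-- The Hecke condition `(q·I − R)(q⁻¹·I + R) = 0`. -/
def HeckeCond {N : ℕ} (R : RMat N) (q : ℂ) : Prop :=
  (q • (1 : RMat N) - R) * (q⁻¹ • (1 : RMat N) + R) = 0

/-- The Reflection Equation `R M₁ R M₁ = M₁ R M₁ R` (on `(ℂ^N)^{⊗2}`,
with entries in `A`). -/
def RERel {N : ℕ} (R : RMat N) {A : Type _} [Ring A] [Algebra ℂ A]
    (M : Matrix (Fin N) (Fin N) A) : Prop :=
  liftC A (embR 2 R 0) * emb1 2 M * liftC A (embR 2 R 0) * emb1 2 M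
    = emb1 2 M * liftC A (embR 2 R 0) * emb1 2 M * liftC A (embR 2 R 0)

/-- The relation `R⁻¹ D₁ R⁻¹ D₁ = D₁ R⁻¹ D₁ R⁻¹` on the matrix `D`,
where `Rinv = R⁻¹`. -/
def DDRel {N : ℕ} (Rinv : RMat N) {A : Type _} [Ring A] [Algebra ℂ A]
    (D : Matrix (Fin N) (Fin N) A) : Prop :=
  liftC A (embR 2 Rinv 0) * emb1 2 D * liftC A (embR 2 Rinv 0) * emb1 2 D
    = emb1 2 D * liftC A (embR 2 Rinv 0) * emb1 2 D * liftC A (embR 2 Rinv 0)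

/-- The permutation relations `D₁ R M₁ = R M₁ R⁻¹ D₁ R⁻¹ + I`, where `Rinv = R⁻¹`. -/
def PermRel {N : ℕ} (R Rinv : RMat N) {A : Type _} [Ring A] [Algebra ℂ A]
    (M D : Matrix (Fin N) (Fin N) A) : Prop :=
  emb1 2 D * liftC A (embR 2 R 0) * emb1 2 M
    = liftC A (embR 2 R 0) * emb1 2 M * liftC A (embR 2 Rinv 0) * emb1 2 D *
        liftC A (embR 2 Rinv 0) + 1

/-- `Ψ` is the skew-inverse of `R`:  `Σ_{j,b} R^{ij}_{ab} Ψ^{bc}_{jd} = δ^i_d δ^c_a`. -/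
def SkewInv {N : ℕ} (R Ψ : RMat N) : Prop :=
  ∀ i a c d : Fin N,
    (∑ j : Fin N, ∑ b : Fin N, R (i, j) (a, b) * Ψ (b, c) (j, d))
      = if i = d ∧ c = a then 1 else 0

/-- The matrix `C`, `C^c_d = Σ_i Ψ^{ic}_{id}`. -/
def Cmat {N : ℕ} (Ψ : RMat N) : Matrix (Fin N) (Fin N) ℂ :=
  fun c d => ∑ i : Fin N, Ψ (i, c) (i, d)

/-- The `R`-trace over all `k` tensor factors: `⟨X⟩_{1…k} = Tr(C^{⊗k} X)`. -/
def rTr {N k : ℕ} {A : Type _} [Ring A] [Algebra ℂ A] (C : Matrix (Fin N) (Fin N) ℂ)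
    (X : TMat N k A) : A :=
  ∑ f : Fin k → Fin N, ∑ g : Fin k → Fin N, (∏ j : Fin k, C (f j) (g j)) • X g f

/-- The chain `X_{1̄} X_{2̄} ⋯ X_{n̄}`. -/
def upChain {N : ℕ} (k : ℕ) (R Rinv : RMat N) {A : Type _} [Ring A] [Algebra ℂ A]
    (X : Matrix (Fin N) (Fin N) A) (n : ℕ) : TMat N k A :=
  ((List.range n).map (copyX k R Rinv X)).prod

/-- The reversed chain `X_{n̄} X_{\overline{n-1}} ⋯ X_{1̄}`. -/
def downChain {N : ℕ} (k : ℕ) (R Rinv : RMat N) {A : Type _} [Ring A] [Algebra ℂ A]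
    (X : Matrix (Fin N) (Fin N) A) (n : ℕ) : TMat N k A :=
  ((List.range n).reverse.map (copyX k R Rinv X)).prod

/-- The Capelli chain `L_{1̄}(L_{2̄} + q·1_q I)(L_{3̄} + q²·2_q I) ⋯ (L_{n̄} + q^{n-1}·(n-1)_q I)`
(note `0_q = 0`). -/
def capChainA {N : ℕ} (k : ℕ) (R Rinv : RMat N) (q : ℂ) {A : Type _} [Ring A] [Algebra ℂ A]
    (L : Matrix (Fin N) (Fin N) A) (n : ℕ) : TMat N k A :=
  ((List.range n).map
    (fun i => copyX k R Rinv L i + ((q ^ i) * qNum q i) • (1 : TMat N k A))).prod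

/-- The symmetric Capelli chain
`L_{1̄}(L_{2̄} - q⁻¹·1_q I) ⋯ (L_{n̄} - q^{-(n-1)}·(n-1)_q I)`. -/
def capChainS {N : ℕ} (k : ℕ) (R Rinv : RMat N) (q : ℂ) {A : Type _} [Ring A] [Algebra ℂ A]
    (L : Matrix (Fin N) (Fin N) A) (n : ℕ) : TMat N k A :=
  ((List.range n).map
    (fun i => copyX k R Rinv L i - ((q⁻¹ ^ i) * qNum q i) • (1 : TMat N k A))).prod

/-- The descending chain `R_{a→b} = R_a R_{a-1} ⋯ R_b` (1-based indices;
identity when `b > a`). -/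
def rChainDesc {N : ℕ} (k : ℕ) (R : RMat N) (a b : ℕ) : TMat N k ℂ :=
  ((List.range' b (a + 1 - b)).reverse.map (fun j => embR k R (j - 1))).prod

/-- The ascending chain `R_{b→a} = R_b R_{b+1} ⋯ R_a` (1-based indices;
identity when `b > a`). -/
def rChainAsc {N : ℕ} (k : ℕ) (R : RMat N) (b a : ℕ) : TMat N k ℂ :=
  ((List.range' b (a + 1 - b)).map (fun j => embR k R (j - 1))).prod

/-! ### Abstract algebraic part -/

section AbstractPart

variable {B : Type*} [Ring B] [Algebra ℂ B]

/-- Abstract copies of `x`. -/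
def cpA (r : ℕ → Bˣ) (x : B) : ℕ → B
  | 0 => x
  | i + 1 => (r i : B) * cpA r x i * ((r i)⁻¹ : Bˣ)

lemma cpA_comm_gt (r : ℕ → Bˣ) (hc : ∀ i j, i + 2 ≤ j → Commute (r i : B) (r j)) (x : B)
    (hx : ∀ j, 1 ≤ j → Commute (r j : B) x) :
    ∀ i j, i < j → Commute (r j : B) (cpA r x i) := by
  intro i
  induction i with
  | zero => intro j hj; exact hx j hj
  | succ i ih =>
    intro j hj
    have h1 : Commute (r j : B) (r i) := (hc i j (by omega)).symm
    exact (h1.mul_right (ih j (by omega))).mul_right (Commute.units_inv_right h1)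

lemma unit_semiconj_braid (a b : Bˣ) (h : (a : B) * b * a = b * a * b) :
    SemiconjBy ((a * b : Bˣ) : B) (a : B) (b : B) := by
  simp only [SemiconjBy, Units.val_mul]
  rw [h, mul_assoc]

lemma cpA_comm_lt (k : ℕ) (r : ℕ → Bˣ) (hc : ∀ i j, i + 2 ≤ j → Commute (r i : B) (r j))
    (hb : ∀ i, i + 2 < k → (r i : B) * r (i + 1) * r i = r (i + 1) * r i * r (i + 1)) (x : B)
    (hx : ∀ j, 1 ≤ j → Commute (r j : B) x) (j n : ℕ) (hjn : j + 2 ≤ n) :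
    n < k → Commute (r j : B) (cpA r x n) := by
  induction n, hjn using Nat.le_induction with
  | base =>
    intro hk
    have hbj := hb j hk
    -- g = r (j+1) * r j
    have h1 : SemiconjBy ((r (j + 1) * r j : Bˣ) : B) (r (j + 1) : B) (r j : B) :=
      unit_semiconj_braid _ _ hbj.symm
    have h2 : SemiconjBy ((r (j + 1) * r j : Bˣ) : B) (cpA r x j) (cpA r x (j + 2)) := by
      simp [SemiconjBy, cpA, mul_assoc]
    have h3 : Commute (r (j + 1) : B) (cpA r x j) := cpA_comm_gt r hc x hx j (j + 1) (by omega)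
    have h4 := (h1.mul_right h2).eq
    have h5 := (h2.mul_right h1).eq
    rw [h3.eq, h5] at h4
    exact ((Units.mul_left_inj _).1 h4).symm
  | succ n hn ih =>
    intro hk
    have h1 : Commute (r j : B) (r n) := hc j n hn
    exact (h1.mul_right (ih (by omega))).mul_right (Commute.units_inv_right h1)

lemma cpA_semiconj (r : ℕ → Bˣ) (hc : ∀ i j, i + 2 ≤ j → Commute (r i : B) (r j)) (x : B)
    (hx : ∀ j, 1 ≤ j → Commute (r j : B) x) (i : ℕ) :
    SemiconjBy ((r i * r (i + 1) : Bˣ) : B) (cpA r x i) (cpA r x (i + 1)) := by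
  have h3 : Commute (r (i + 1) : B) (cpA r x i) := cpA_comm_gt r hc x hx i (i + 1) (by omega)
  simp only [SemiconjBy, Units.val_mul, cpA]
  rw [mul_assoc, h3.eq]
  simp [mul_assoc]

lemma semiconj_inv_right {g a b : Bˣ} (h : SemiconjBy (g : B) (a : B) (b : B)) :
    SemiconjBy (g : B) ((a⁻¹ : Bˣ) : B) ((b⁻¹ : Bˣ) : B) := by
  exact SemiconjBy.units_inv_right h

lemma semiconj_eq {g : Bˣ} {a b a' b' : B} (ha : SemiconjBy (g : B) a a')
    (hb : SemiconjBy (g : B) b b') (h : a = b) : a' = b' := by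
  subst h
  exact (Units.mul_left_inj g).1 (ha.eq.symm.trans hb.eq)

lemma perm_all (k : ℕ) (r : ℕ → Bˣ) (hc : ∀ i j, i + 2 ≤ j → Commute (r i : B) (r j))
    (hb : ∀ i, i + 2 < k → (r i : B) * r (i + 1) * r i = r (i + 1) * r i * r (i + 1)) (m d : B)
    (hm : ∀ j, 1 ≤ j → Commute (r j : B) m) (hd : ∀ j, 1 ≤ j → Commute (r j : B) d)
    (hp : 1 < k → d * r 0 * m = r 0 * m * ((r 0)⁻¹ : Bˣ) * d * ((r 0)⁻¹ : Bˣ) + 1) :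
    ∀ i, i + 1 < k → cpA r d i * r i * cpA r m i
      = r i * cpA r m i * ((r i)⁻¹ : Bˣ) * cpA r d i * ((r i)⁻¹ : Bˣ) + 1 := by
  intro i
  induction i with
  | zero => intro h; exact hp h
  | succ i ih =>
    intro h
    have h1 := unit_semiconj_braid _ _ (hb i h)
    have h2 := cpA_semiconj r hc m hm i
    have h3 := cpA_semiconj r hc d hd i
    have h4 := semiconj_inv_right h1
    exact semiconj_eq ((h3.mul_right h1).mul_right h2)
      (((((h1.mul_right h2).mul_right h4).mul_right h3).mul_right h4).add_right
        (SemiconjBy.one_right _)) (ih (by omega))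

lemma dd_all (k : ℕ) (r : ℕ → Bˣ) (hc : ∀ i j, i + 2 ≤ j → Commute (r i : B) (r j))
    (hb : ∀ i, i + 2 < k → (r i : B) * r (i + 1) * r i = r (i + 1) * r i * r (i + 1)) (d : B)
    (hd : ∀ j, 1 ≤ j → Commute (r j : B) d)
    (hp : 1 < k → ((r 0)⁻¹ : Bˣ) * d * ((r 0)⁻¹ : Bˣ) * d = d * ((r 0)⁻¹ : Bˣ) * d * ((r 0)⁻¹ : Bˣ)) :
    ∀ i, i + 1 < k → ((r i)⁻¹ : Bˣ) * cpA r d i * ((r i)⁻¹ : Bˣ) * cpA r d i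
      = cpA r d i * ((r i)⁻¹ : Bˣ) * cpA r d i * ((r i)⁻¹ : Bˣ) := by
  intro i
  induction i with
  | zero => intro h; exact hp h
  | succ i ih =>
    intro h
    have h1 := unit_semiconj_braid _ _ (hb i h)
    have h3 := cpA_semiconj r hc d hd i
    have h4 := semiconj_inv_right h1
    exact semiconj_eq (((h4.mul_right h3).mul_right h4).mul_right h3)
      (((h3.mul_right h4).mul_right h3).mul_right h4) (ih (by omega))

/-- Descending product. -/
def dnA (r : ℕ → Bˣ) (d : B) : ℕ → B
  | 0 => 1
  | n + 1 => cpA r d n * dnA r d n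

/-- Ascending product. -/
def upA (r : ℕ → Bˣ) (m : B) : ℕ → B
  | 0 => 1
  | n + 1 => upA r m n * cpA r m n

/-- Inverse Jucys–Murphy elements. -/
def jmA (r : ℕ → Bˣ) : ℕ → B
  | 0 => 1
  | n + 1 => ((r n)⁻¹ : Bˣ) * jmA r n * ((r n)⁻¹ : Bˣ)

/-- Lower order terms. -/
def errA (r : ℕ → Bˣ) (d : B) : ℕ → B
  | 0 => 0
  | n + 1 => dnA r d n * jmA r n * ((r n)⁻¹ : Bˣ)
      + cpA r d n * r n * errA r d n * ((r n)⁻¹ : Bˣ)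

lemma dnA_comm (r : ℕ → Bˣ) (hc : ∀ i j, i + 2 ≤ j → Commute (r i : B) (r j)) (d : B)
    (hd : ∀ j, 1 ≤ j → Commute (r j : B) d) :
    ∀ n j, n ≤ j → Commute (r j : B) (dnA r d n) := by
  intro n
  induction n with
  | zero => intro j _; exact Commute.one_right _
  | succ n ih =>
    intro j hj
    exact (cpA_comm_gt r hc d hd n j hj).mul_right (ih j (by omega))

lemma dn_jm (k : ℕ) (r : ℕ → Bˣ) (d : B)
    (hW : ∀ n, Commute (r n : B) (dnA r d n))
    (hdd : ∀ i, i + 1 < k → ((r i)⁻¹ : Bˣ) * cpA r d i * ((r i)⁻¹ : Bˣ) * cpA r d i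
      = cpA r d i * ((r i)⁻¹ : Bˣ) * cpA r d i * ((r i)⁻¹ : Bˣ)) :
    ∀ n, n < k → dnA r d n * jmA r n * cpA r d n = cpA r d n * dnA r d n * jmA r n := by
  intro n
  induction n with
  | zero => intro _; simp [dnA, jmA]
  | succ n ih =>
    intro h
    have ih := ih (by omega)
    have hdd := hdd n h
    have hw : Commute (((r n)⁻¹ : Bˣ) : B) (dnA r d n) := Commute.units_inv_left (hW n)
    simp only [dnA, jmA, cpA]
    generalize cpA r d n = x at *
    generalize dnA r d n = w at *
    generalize jmA r n = J at *
    have hrs : ((r n)⁻¹ : Bˣ) * (r n : B) = 1 := Units.inv_mul _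
    have hsr : (r n : B) * ((r n)⁻¹ : Bˣ) = 1 := Units.mul_inv _
    generalize (((r n)⁻¹ : Bˣ) : B) = s at *
    generalize (r n : B) = t at *
    calc x * w * (s * J * s) * (t * x * s) = x * (w * s) * J * (s * t) * x * s := by noncomm_ring
      _ = x * s * (w * J * x) * s := by rw [← hw.eq, hrs]; noncomm_ring
      _ = (x * s * x) * w * J * s := by rw [ih]; noncomm_ring
      _ = (t * s) * (x * s * x) * w * J * s := by rw [hsr]; noncomm_ring
      _ = t * (s * x * s * x) * w * J * s := by noncomm_ring
      _ = t * (x * s * x) * (s * w) * J * s := by rw [hdd]; noncomm_ring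
      _ = t * x * s * (x * w) * (s * J * s) := by rw [hw.eq]; noncomm_ring

lemma dn_m (k : ℕ) (r : ℕ → Bˣ) (m d : B)
    (hW : ∀ n, Commute (r n : B) (dnA r d n))
    (hp : ∀ i, i + 1 < k → cpA r d i * r i * cpA r m i
      = r i * cpA r m i * ((r i)⁻¹ : Bˣ) * cpA r d i * ((r i)⁻¹ : Bˣ) + 1) :
    ∀ n, n < k → dnA r d n * cpA r m n = cpA r m n * dnA r d n * jmA r n + errA r d n := by
  intro n
  induction n with
  | zero => intro _; simp [dnA, jmA, errA]
  | succ n ih =>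
    intro h
    have ih := ih (by omega)
    have hp := hp n h
    have hW := hW n
    have hw : Commute (((r n)⁻¹ : Bˣ) : B) (dnA r d n) := Commute.units_inv_left hW
    simp only [dnA, jmA, cpA, errA]
    generalize cpA r d n = x at *
    generalize cpA r m n = y at *
    generalize dnA r d n = w at *
    generalize jmA r n = J at *
    generalize errA r d n = E at *
    generalize (((r n)⁻¹ : Bˣ) : B) = s at *
    generalize (r n : B) = t at *
    calc x * w * (t * y * s) = x * (w * t) * y * s := by noncomm_ring
      _ = x * t * (w * y) * s := by rw [← hW.eq]; noncomm_ring
      _ = (x * t * y) * w * J * s + x * t * E * s := by rw [ih]; noncomm_ring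
      _ = t * y * s * x * (s * w) * J * s + w * J * s + x * t * E * s := by
        rw [hp]; noncomm_ring
      _ = _ := by rw [hw.eq]; noncomm_ring

lemma inv_smul_of {q : ℂ} (hq : q ≠ 0) (u : Bˣ) (T : B) (h : (u : B) * T = q • T) :
    ((u⁻¹ : Bˣ) : B) * T = q⁻¹ • T := by
  have : T = q⁻¹ • ((u : B) * T) := by rw [h, smul_smul, inv_mul_cancel₀ hq, one_smul]
  conv_lhs => rw [this]
  rw [mul_smul_comm, Units.inv_mul_cancel_left]

lemma jm_smul {q : ℂ} (hq : q ≠ 0) (r : ℕ → Bˣ) (T : B) :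
    ∀ n, (∀ i, i < n → (r i : B) * T = q • T) → jmA r n * T = (q⁻¹ ^ (2 * n)) • T := by
  intro n
  induction n with
  | zero => intro _; simp [jmA]
  | succ n ih =>
    intro h
    have h1 := inv_smul_of hq _ _ (h n (by omega))
    have ih := ih (fun i hi => h i (by omega))
    simp only [jmA]
    rw [mul_assoc, h1, mul_smul_comm, mul_assoc, ih, mul_smul_comm, h1, smul_smul, smul_smul]
    congr 1
    ring

/-- sum of odd inverse powers. -/
def lamA (q : ℂ) : ℕ → ℂ
  | 0 => 0
  | n + 1 => q⁻¹ ^ (2 * n + 1) + lamA q n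

lemma err_smul {q : ℂ} (hq : q ≠ 0) (k : ℕ) (r : ℕ → Bˣ) (d : B)
    (hW : ∀ n, Commute (r n : B) (dnA r d n))
    (hJ : ∀ n, n < k → dnA r d n * jmA r n * cpA r d n = cpA r d n * dnA r d n * jmA r n)
    (T : B) :
    ∀ n, n < k → (∀ i, i < n → (r i : B) * T = q • T) →
      errA r d n * cpA r d n * T = lamA q n • (dnA r d n * T) := by
  intro n
  induction n with
  | zero => intro _ _; simp [errA, lamA]
  | succ n ih =>
    intro hk h
    have hr := h n (by omega)
    have h1 := inv_smul_of hq _ _ hr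
    have h2 := jm_smul hq r T n (fun i hi => h i (by omega))
    have ih := ih (by omega) (fun i hi => h i (by omega))
    have hJ := hJ n (by omega)
    have hW := hW n
    simp only [dnA, cpA, errA, lamA]
    have hrs : ((r n)⁻¹ : Bˣ) * (r n : B) = 1 := Units.inv_mul _
    generalize cpA r d n = x at *
    generalize dnA r d n = w at *
    generalize jmA r n = J at *
    generalize errA r d n = E at *
    generalize (((r n)⁻¹ : Bˣ) : B) = s at *
    generalize (r n : B) = t at *
    have e1 : (w * J * s + x * t * E * s) * (t * x * s) * T
        = w * J * (s * t) * x * (s * T) + x * t * E * (s * t) * x * (s * T) := by noncomm_ring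
    rw [e1, hrs, h1]
    have e2 : w * J * 1 * x * (q⁻¹ • T) + x * t * E * 1 * x * (q⁻¹ • T)
        = q⁻¹ • ((w * J * x) * T + x * t * (E * x * T)) := by
      simp only [mul_smul_comm, smul_add, mul_one]; congr 2; noncomm_ring
    have e3 : x * w * J * T = x * w * (J * T) := by noncomm_ring
    have e4 : x * t * (w * T) = x * (t * w) * T := by noncomm_ring
    have e5 : x * (w * t) * T = x * w * (t * T) := by noncomm_ring
    rw [e2, hJ, ih, mul_smul_comm, e3, h2, e4, hW.eq, e5, hr]
    simp only [mul_smul_comm, smul_add, smul_smul, add_smul, mul_assoc]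
    congr 2
    · ring
    · field_simp

/-- Abstract Capelli chain. -/
def capA (r : ℕ → Bˣ) (q : ℂ) (l : B) : ℕ → B
  | 0 => 1
  | n + 1 => capA r q l n * (cpA r l n - lamA q n • (1 : B))

lemma cpA_mul (r : ℕ → Bˣ) (m d : B) (n : ℕ) : cpA r (m * d) n = cpA r m n * cpA r d n := by
  induction n with
  | zero => rfl
  | succ n ih => simp [cpA, ih, mul_assoc]

theorem capelli_abs {q : ℂ} (hq : q ≠ 0) (k : ℕ) (r : ℕ → Bˣ)
    (hc : ∀ i j, i + 2 ≤ j → Commute (r i : B) (r j))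
    (hb : ∀ i, i + 2 < k → (r i : B) * r (i + 1) * r i = r (i + 1) * r i * r (i + 1)) (m d : B)
    (hm : ∀ j, 1 ≤ j → Commute (r j : B) m) (hd : ∀ j, 1 ≤ j → Commute (r j : B) d)
    (hp : 1 < k → d * r 0 * m = r 0 * m * ((r 0)⁻¹ : Bˣ) * d * ((r 0)⁻¹ : Bˣ) + 1)
    (hdd : 1 < k →
      ((r 0)⁻¹ : Bˣ) * d * ((r 0)⁻¹ : Bˣ) * d = d * ((r 0)⁻¹ : Bˣ) * d * ((r 0)⁻¹ : Bˣ)) :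
    ∀ n, n ≤ k → ∀ T : B, (∀ i, i + 1 < n → (r i : B) * T = q • T) →
      capA r q (m * d) n * T = (q⁻¹ ^ (n * (n - 1))) • (upA r m n * dnA r d n * T) := by
  have hW : ∀ n, Commute (r n : B) (dnA r d n) := fun n => dnA_comm r hc d hd n n le_rfl
  have hp' := perm_all k r hc hb m d hm hd hp
  have hdd' := dd_all k r hc hb d hd hdd
  have hJ := dn_jm k r d hW hdd'
  have hG := dn_m k r m d hW hp'
  have hmd : ∀ j, 1 ≤ j → Commute (r j : B) (m * d) := fun j hj => (hm j hj).mul_right (hd j hj)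
  intro n
  induction n with
  | zero => intro _ T _; simp [capA, upA, dnA]
  | succ n ih =>
    intro hk T hT
    have hE := err_smul hq k r d hW hJ T n (by omega) (fun i hi => hT i (by omega))
    have h2 := jm_smul hq r T n (fun i hi => hT i (by omega))
    have ih := ih (by omega) ((cpA r (m * d) n - lamA q n • (1 : B)) * T) (by
      intro i hi
      have h1 := cpA_comm_lt k r hc hb (m * d) hmd i n (by omega) (by omega)
      have h3 := hT i (by omega)
      rw [sub_mul, mul_sub, ← mul_assoc, h1.eq, mul_assoc, h3, smul_one_mul, mul_smul_comm,
        mul_smul_comm, h3, smul_sub, smul_comm])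
    have hJ := hJ n (by omega)
    have hG := hG n (by omega)
    simp only [capA, upA, dnA]
    rw [mul_assoc, ih, cpA_mul]
    generalize cpA r d n = x at *
    generalize cpA r m n = y at *
    generalize dnA r d n = w at *
    generalize jmA r n = J at *
    generalize errA r d n = E at *
    generalize upA r m n = U at *
    have e1 : U * w * ((y * x - lamA q n • (1 : B)) * T)
        = U * ((w * y) * x * T - lamA q n • (w * T)) := by
      simp only [sub_mul, mul_sub, smul_one_mul, mul_smul_comm]; simp only [mul_assoc]
    have e2 : (y * w * J + E) * x * T = y * (w * J * x) * T + E * x * T := by noncomm_ring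
    have e3 : y * (x * w * J) * T = y * x * w * (J * T) := by noncomm_ring
    rw [e1, hG, e2, hE, hJ, e3, h2, add_sub_cancel_right, mul_smul_comm, mul_smul_comm, smul_smul]
    congr 1
    · rw [← pow_add]; congr 1
      cases n with
      | zero => rfl
      | succ n => simp only [Nat.add_sub_cancel]; ring
    · simp only [mul_assoc]

/-- Abstract symmetrizers. -/
def symA (r : ℕ → B) (q : ℂ) : ℕ → B
  | 0 => 1
  | 1 => 1
  | j + 2 =>
      (qNum q (j + 2))⁻¹ •
        (symA r q (j + 1) *
          ((q⁻¹ ^ (j + 1)) • (1 : B) + (qNum q (j + 1)) • r j) *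
          symA r q (j + 1))

lemma qNum_succ {q : ℂ} (hq0 : q ≠ 0) (hq : q - q⁻¹ ≠ 0) (n : ℕ) :
    q⁻¹ ^ n + qNum q n * q = qNum q (n + 1) := by
  unfold qNum
  rw [eq_div_iff hq, add_mul, div_mul_eq_mul_div, div_mul_cancel₀ _ hq]
  have : q⁻¹ * q = 1 := inv_mul_cancel₀ hq0
  rw [pow_succ, pow_succ]; linear_combination (q⁻¹ ^ n ) * 0

lemma lamA_eq {q : ℂ} (hq0 : q ≠ 0) (hq : q - q⁻¹ ≠ 0) (n : ℕ) :
    lamA q n = q⁻¹ ^ n * qNum q n := by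
  induction n with
  | zero => simp [lamA, qNum]
  | succ n ih =>
    rw [← qNum_succ hq0 hq n, lamA, ih]
    have : q⁻¹ * q = 1 := inv_mul_cancel₀ hq0
    rw [pow_succ, pow_succ, pow_mul']
    linear_combination (- q⁻¹ ^ n * qNum q n) * this

lemma symA_comm (r : ℕ → B) (q : ℂ) (hc : ∀ i j, i + 2 ≤ j → Commute (r i) (r j)) :
    ∀ n j, n ≤ j → Commute (r j) (symA r q n)
  | 0, _, _ => Commute.one_right _
  | 1, _, _ => Commute.one_right _
  | n + 2, j, h => by
    have ih := symA_comm r q hc (n + 1) j (by omega)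
    rw [symA]
    refine Commute.smul_right ((ih.mul_right ?_).mul_right ih) _
    exact ((Commute.one_right _).smul_right _).add_right ((hc n j h).symm.smul_right _)

theorem symA_props {q : ℂ} (hq0 : q ≠ 0) (hq : q - q⁻¹ ≠ 0) (k : ℕ) (r : ℕ → B)
    (hc : ∀ i j, i + 2 ≤ j → Commute (r i) (r j))
    (hb : ∀ i, i + 2 < k → r i * r (i + 1) * r i = r (i + 1) * r i * r (i + 1))
    (hh : ∀ i, i + 1 < k → r i * r i = 1 + (q - q⁻¹) • r i)
    (hn : ∀ j : ℕ, 2 ≤ j → j ≤ k → qNum q j ≠ 0) :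
    ∀ n, n + 1 ≤ k → (∀ i, i < n → r i * symA r q (n + 1) = q • symA r q (n + 1)) ∧
      symA r q (n + 1) * symA r q (n + 1) = symA r q (n + 1) ∧
      symA r q n * symA r q (n + 1) = symA r q (n + 1) := by
  intro n
  induction n with
  | zero => intro _; simp [symA]
  | succ n ih =>
    intro hk
    obtain ⟨h1, h2, h3⟩ := ih (by omega)
    have hne : qNum q (n + 2) ≠ 0 := hn _ (by omega) hk
    set S := symA r q (n + 1) with hS
    have hX : symA r q (n + 2) = (qNum q (n + 2))⁻¹ •
        (S * ((q⁻¹ ^ (n + 1)) • (1 : B) + (qNum q (n + 1)) • r n) * S) := by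
      rw [symA]
    have hlow : S * symA r q (n + 2) = symA r q (n + 2) := by
      rw [hX, mul_smul_comm, mul_assoc, ← mul_assoc S S, h2]
    have hlow' : symA r q (n + 2) * S = symA r q (n + 2) := by
      rw [hX, smul_mul_assoc, mul_assoc, h2]
    have htop : r n * symA r q (n + 2) = q • symA r q (n + 2) := by
      rw [hX, mul_smul_comm, smul_comm]
      congr 1
      have hhn := hh n (by omega)
      cases n with
      | zero =>
        have : S = 1 := by rw [hS]; rfl
        have hq1 : qNum q 1 = 1 := by simp [qNum, div_self hq]
        rw [this]
        simp only [zero_add, pow_one, hq1, one_mul, mul_one, one_smul, mul_add, hhn, mul_smul_comm,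
          smul_add, smul_smul, mul_inv_cancel₀ hq0]
        module
      | succ n =>
        have hnn : qNum q (n + 2) ≠ 0 := hn _ (by omega) (by omega)
        have hY : S = (qNum q (n + 2))⁻¹ • (symA r q (n + 1) *
          ((q⁻¹ ^ (n + 1)) • (1 : B) + (qNum q (n + 1)) • r n) * symA r q (n + 1)) := by
          rw [hS, symA]
        have hcm : Commute (r (n + 1)) (symA r q (n + 1)) := symA_comm r q hc (n + 1) (n + 1) le_rfl
        have hbn := hb n (by omega)
        have hp := h1 n (by omega)
        set V := symA r q (n + 1)
        set t := r (n + 1)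
        set p := r n
        have key : qNum q (n + 2) • (S * t * S)
            = (q⁻¹ ^ (n + 1)) • (t * S) + (qNum q (n + 1)) • (V * p * t * S) := by
          have a1 : V * t * S = t * S := by rw [← hcm.eq, mul_assoc, h3]
          have a2 : qNum q (n + 2) • S = V *
            ((q⁻¹ ^ (n + 1)) • (1 : B) + (qNum q (n + 1)) • p) * V := by
            conv_lhs => rw [hY]
            rw [smul_smul, mul_inv_cancel₀ hnn, one_smul]
          rw [mul_assoc, ← smul_mul_assoc, a2, mul_assoc _ V, ← mul_assoc V t S, a1, mul_add,
            add_mul]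
          simp only [mul_smul_comm, smul_mul_assoc, mul_one, ← mul_assoc]
          rw [a1]
        have hX2 : S * ((q⁻¹ ^ (n + 2)) • (1 : B) + (qNum q (n + 2)) • t) * S
            = (q⁻¹ ^ (n + 2)) • S + (q⁻¹ ^ (n + 1)) • (t * S)
              + (qNum q (n + 1)) • (V * p * t * S) := by
          rw [mul_add, add_mul, mul_smul_comm, mul_smul_comm, smul_mul_assoc, smul_mul_assoc, key,
            mul_one, h2, add_assoc]
        rw [show n + 1 + 1 = n + 2 from rfl, hX2]
        have b1 : t * (t * S) = S + (q - q⁻¹) • (t * S) := by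
          rw [← mul_assoc, hhn, add_mul, one_mul, smul_mul_assoc]
        have b2 : t * (V * p * t * S) = q • (V * p * t * S) := by
          calc t * (V * p * t * S) = (t * V) * p * t * S := by noncomm_ring
            _ = V * (t * p * t) * S := by rw [hcm.eq]; noncomm_ring
            _ = V * p * t * (p * S) := by rw [← hbn]; noncomm_ring
            _ = _ := by rw [hp, mul_smul_comm]
        rw [mul_add, mul_add, mul_smul_comm, mul_smul_comm, mul_smul_comm, b1, b2]
        have hqq : q⁻¹ ^ (n + 1) = q * q⁻¹ ^ (n + 2) := by
          rw [pow_succ _ (n + 1)]; field_simp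
        have hqi : q⁻¹ ^ (n + 2) = q⁻¹ * q⁻¹ ^ (n + 1) := by ring
        simp only [smul_add, smul_smul]
        rw [← hqq, hqi]
        module
    have heig : ∀ i, i < n + 1 → r i * symA r q (n + 2) = q • symA r q (n + 2) := by
      intro i hi
      rcases Nat.lt_succ_iff_lt_or_eq.1 hi with hi | rfl
      · rw [← hlow, ← mul_assoc, h1 i hi, smul_mul_assoc]
      · exact htop
    refine ⟨heig, ?_, hlow⟩
    conv_lhs => enter [1]; rw [hX]
    rw [smul_mul_assoc, mul_assoc, hlow, mul_assoc, add_mul, smul_one_mul, smul_mul_assoc, htop,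
      smul_smul, ← add_smul, qNum_succ hq0 hq, mul_smul_comm, hlow, smul_smul,
      inv_mul_cancel₀ hne, one_smul]

end AbstractPart

/-! ### `C ⊗ C` commutes with `R` -/

section CCPart

variable {N : ℕ}

/-- Operator in the first two of three factors. -/
def opOneTwo (Z : RMat N) : Matrix (Fin N × Fin N × Fin N) (Fin N × Fin N × Fin N) ℂ :=
  fun p p' => if p.2.2 = p'.2.2 then Z (p.1, p.2.1) (p'.1, p'.2.1) else 0

/-- Operator in the last two of three factors. -/
def opTwoThree (Z : RMat N) : Matrix (Fin N × Fin N × Fin N) (Fin N × Fin N × Fin N) ℂ :=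
  fun p p' => if p.1 = p'.1 then Z p.2 p'.2 else 0

/-- Functions on three points as triples. -/
def threeEquiv (N : ℕ) : (Fin 3 → Fin N) ≃ Fin N × Fin N × Fin N where
  toFun f := (f 0, f 1, f 2)
  invFun p := ![p.1, p.2.1, p.2.2]
  left_inv f := by ext i; fin_cases i <;> rfl
  right_inv p := rfl

lemma embR_three_zero (Z : RMat N) :
    embR 3 Z 0 = (opOneTwo Z).submatrix (threeEquiv N) (threeEquiv N) := by
  ext f g
  simp [embR, opOneTwo, Fin.forall_fin_succ]
  rfl

lemma embR_three_one (Z : RMat N) :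
    embR 3 Z 1 = (opTwoThree Z).submatrix (threeEquiv N) (threeEquiv N) := by
  ext f g
  simp [embR, opTwoThree, Fin.forall_fin_succ]
  rfl

lemma braid_ops {R : RMat N} (h : IsBraiding R) :
    opOneTwo R * opTwoThree R * opOneTwo R = opTwoThree R * opOneTwo R * opTwoThree R := by
  unfold IsBraiding at h
  simp only [embR_three_zero, embR_three_one, Matrix.submatrix_mul_equiv] at h
  ext p p'
  have := congrFun (congrFun h ((threeEquiv N).symm p)) ((threeEquiv N).symm p')
  simpa using this

lemma opOneTwo_mul (Z W : RMat N) : opOneTwo Z * opOneTwo W = opOneTwo (Z * W) := by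
  ext ⟨a, b, c⟩ ⟨a', b', c'⟩
  simp only [Matrix.mul_apply, opOneTwo, Fintype.sum_prod_type]
  by_cases h : c = c' <;> simp [h]

lemma opTwoThree_mul (Z W : RMat N) : opTwoThree Z * opTwoThree W = opTwoThree (Z * W) := by
  ext ⟨a, b⟩ ⟨a', b'⟩
  simp only [Matrix.mul_apply, opTwoThree]
  rw [Fintype.sum_prod_type]
  by_cases h : a = a'
  · subst h; simp
  · simp [h]

lemma opOneTwo_one : opOneTwo (1 : RMat N) = 1 := by
  ext ⟨a, b, c⟩ ⟨a', b', c'⟩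
  simp only [opOneTwo, Matrix.one_apply, Prod.mk.injEq]
  split_ifs <;> tauto

lemma opTwoThree_one : opTwoThree (1 : RMat N) = 1 := by
  ext ⟨a, b⟩ ⟨a', b'⟩
  simp only [opTwoThree, Matrix.one_apply, Prod.mk.injEq]
  split_ifs <;> tauto

/-- Partial trace with weight `C` over the first factor. -/
def ptr (C : Matrix (Fin N) (Fin N) ℂ)
    (Y : Matrix (Fin N × Fin N × Fin N) (Fin N × Fin N × Fin N) ℂ) : RMat N :=
  fun p p' => ∑ a, ∑ b, C a b * Y (b, p) (a, p')

lemma ptr_left (C : Matrix (Fin N) (Fin N) ℂ) (Z : RMat N)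
    (Y : Matrix (Fin N × Fin N × Fin N) (Fin N × Fin N × Fin N) ℂ) :
    ptr C (opTwoThree Z * Y) = Z * ptr C Y := by
  have key : ∀ b p r, (opTwoThree Z * Y) (b, p) r = ∑ t, Z p t * Y (b, t) r := by
    intro b p r
    rw [Matrix.mul_apply, Fintype.sum_prod_type]
    simp [opTwoThree]
  ext p p'
  simp only [ptr, key, Matrix.mul_apply, Finset.mul_sum]
  rw [Finset.sum_comm]
  conv_rhs => rw [Finset.sum_comm]; enter [2, y]; rw [Finset.sum_comm]
  rw [Finset.sum_comm]
  refine Finset.sum_congr rfl fun a _ => Finset.sum_congr rfl fun b _ =>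
    Finset.sum_congr rfl fun t _ => by ring

lemma ptr_right (C : Matrix (Fin N) (Fin N) ℂ) (Z : RMat N)
    (Y : Matrix (Fin N × Fin N × Fin N) (Fin N × Fin N × Fin N) ℂ) :
    ptr C (Y * opTwoThree Z) = ptr C Y * Z := by
  have key : ∀ b p r, (Y * opTwoThree Z) r (b, p) = ∑ t, Y r (b, t) * Z t p := by
    intro b p r
    rw [Matrix.mul_apply, Fintype.sum_prod_type, Finset.sum_comm]
    simp [opTwoThree]
  ext p p'
  simp only [ptr, key, Matrix.mul_apply, Finset.mul_sum, Finset.sum_mul]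
  conv_rhs => rw [Finset.sum_comm]; enter [2, y]; rw [Finset.sum_comm]
  refine Finset.sum_congr rfl fun a _ => Finset.sum_congr rfl fun b _ =>
    Finset.sum_congr rfl fun t _ => by ring

/-- Reshuffle of `R`. -/
def rshR (R : RMat N) : RMat N := fun p p' => R (p.1, p'.2) (p.2, p'.1)

/-- Reshuffle of `Ψ`. -/
def rshP (P : RMat N) : RMat N := fun p p' => P (p.1, p'.2) (p.2, p'.1)

lemma rsh_inv {R P : RMat N} (h : SkewInv R P) : rshR R * rshP P = 1 := by
  ext ⟨i, a⟩ ⟨d, c⟩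
  have := h i a c d
  rw [Finset.sum_comm] at this
  simp only [Matrix.mul_apply, Fintype.sum_prod_type, rshR, rshP, Matrix.one_apply, Prod.mk.injEq]
  rw [this]
  simp only [eq_comm (a := c)]

lemma rsh_inv' {R P : RMat N} (h : SkewInv R P) : rshP P * rshR R = 1 :=
  mul_eq_one_comm.1 (rsh_inv h)

lemma ptr_R {R P : RMat N} (h : SkewInv R P) : ptr (Cmat P) (opOneTwo R) = 1 := by
  ext ⟨j, y⟩ ⟨b, y'⟩
  have key : ∑ c, ∑ d, Cmat P c d * R (d, j) (c, b) = if j = b then 1 else 0 := by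
    have h1 : ∀ i : Fin N, ∑ d, ∑ c, P (i, c) (i, d) * R (d, j) (c, b)
        = if i = b ∧ i = j then 1 else 0 := by
      intro i
      have := congrFun (congrFun (rsh_inv' h) (i, i)) (b, j)
      simpa only [Matrix.mul_apply, Fintype.sum_prod_type, rshR, rshP, Matrix.one_apply,
        Prod.mk.injEq] using this
    calc ∑ c, ∑ d, Cmat P c d * R (d, j) (c, b)
        = ∑ i, ∑ d, ∑ c, P (i, c) (i, d) * R (d, j) (c, b) := by
          simp only [Cmat, Finset.sum_mul]
          rw [Finset.sum_comm]
          conv_rhs => rw [Finset.sum_comm]; enter [2, y]; rw [Finset.sum_comm]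
      _ = ∑ i, if i = b ∧ i = j then 1 else 0 := Finset.sum_congr rfl fun i _ => h1 i
      _ = _ := by
        simp [ite_and, eq_comm]
  simp only [ptr, opOneTwo, Matrix.one_apply, Prod.mk.injEq]
  by_cases hy : y = y'
  · simp [hy, key]
  · simp [hy]

lemma ptr_conj_one {R Rinv P : RMat N} (h1 : R * Rinv = 1) (h2 : Rinv * R = 1)
    (hb : IsBraiding R) (h : SkewInv R P) :
    ptr (Cmat P) (opOneTwo Rinv * opTwoThree R * opOneTwo R) = 1 := by
  have e : opOneTwo Rinv * opTwoThree R * opOneTwo R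
      = opTwoThree R * (opOneTwo R * opTwoThree Rinv) := by
    have a1 : opOneTwo Rinv * opOneTwo R = 1 := by rw [opOneTwo_mul, h2, opOneTwo_one]
    have a2 : opTwoThree R * opTwoThree Rinv = 1 := by rw [opTwoThree_mul, h1, opTwoThree_one]
    calc opOneTwo Rinv * opTwoThree R * opOneTwo R
        = opOneTwo Rinv * (opTwoThree R * opOneTwo R * opTwoThree R) * opTwoThree Rinv := by
          simp only [mul_assoc, a2, mul_one]
      _ = (opOneTwo Rinv * opOneTwo R) * opTwoThree R * opOneTwo R * opTwoThree Rinv := by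
          rw [← braid_ops hb]; simp only [mul_assoc]
      _ = _ := by rw [a1, one_mul, mul_assoc]
  rw [e, ptr_left, ptr_right, ptr_R h, one_mul, h1]

lemma ptr_conj_two {R Rinv P : RMat N} (h1 : R * Rinv = 1) (h2 : Rinv * R = 1)
    (hb : IsBraiding R) (h : SkewInv R P) :
    ptr (Cmat P) (opOneTwo R * opTwoThree R * opOneTwo Rinv) = 1 := by
  have e : opOneTwo R * opTwoThree R * opOneTwo Rinv
      = opTwoThree Rinv * (opOneTwo R * opTwoThree R) := by
    have a1 : opOneTwo R * opOneTwo Rinv = 1 := by rw [opOneTwo_mul, h1, opOneTwo_one]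
    have a2 : opTwoThree Rinv * opTwoThree R = 1 := by rw [opTwoThree_mul, h2, opTwoThree_one]
    calc opOneTwo R * opTwoThree R * opOneTwo Rinv
        = (opTwoThree Rinv * opTwoThree R) * opOneTwo R * opTwoThree R * opOneTwo Rinv := by
          rw [a2, one_mul]
      _ = opTwoThree Rinv * (opTwoThree R * opOneTwo R * opTwoThree R) * opOneTwo Rinv := by
          simp only [mul_assoc]
      _ = _ := by rw [← braid_ops hb]; simp only [mul_assoc, a1, mul_one]
  rw [e, ptr_left, ptr_right, ptr_R h, one_mul, h2]

lemma ptr_comp (C : Matrix (Fin N) (Fin N) ℂ) (X Y Z : RMat N) (x y x' y' : Fin N) :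
    ptr C (opOneTwo X * opTwoThree Y * opOneTwo Z) (x, y) (x', y')
      = ∑ f, ∑ g, (∑ a, ∑ b, ∑ e, C a b * X (b, x) (e, f) * Z (e, g) (a, x')) * Y (f, y) (g, y') := by
  have k1 : ∀ b r, (opOneTwo X * opTwoThree Y) (b, x, y) r
      = ∑ f, X (b, x) (r.1, f) * Y (f, y) r.2 := by
    rintro b ⟨e, g, z⟩
    rw [Matrix.mul_apply]
    simp only [Fintype.sum_prod_type, opOneTwo, opTwoThree]
    simp [ite_mul, mul_ite]
  have k2 : ∀ a b, (opOneTwo X * opTwoThree Y * opOneTwo Z) (b, x, y) (a, x', y')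
      = ∑ e, ∑ g, (∑ f, X (b, x) (e, f) * Y (f, y) (g, y')) * Z (e, g) (a, x') := by
    intro a b
    rw [Matrix.mul_apply]
    simp only [k1, Fintype.sum_prod_type, opOneTwo]
    simp [mul_ite]
  simp only [ptr, k2, Finset.mul_sum, Finset.sum_mul]
  simp only [← Fintype.sum_prod_type']
  refine Fintype.sum_equiv
    ⟨fun t => (t.2.2.2.2, t.2.2.2.1, t.1, t.2.1, t.2.2.1),
     fun t => (t.2.2.1, t.2.2.2.1, t.2.2.2.2, t.2.1, t.1), fun _ => rfl, fun _ => rfl⟩ _ _ ?_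
  rintro ⟨a, b, e, g, f⟩
  simp only [Equiv.coe_fn_mk]
  ring

/-- `Σ_b C(a,b) s(b,x)(e,z)` as a matrix from `(x,z)` to `(e,a)`. -/
lemma cc_aux_one {R Rinv P : RMat N} (h1 : R * Rinv = 1) (h2 : Rinv * R = 1)
    (hb : IsBraiding R) (h : SkewInv R P) (x z v u : Fin N) :
    ∑ b, Cmat P u b * Rinv (b, x) (v, z) = ∑ c, P (x, u) (c, v) * Cmat P c z := by
  have T := ptr_conj_one h1 h2 hb h
  have st1 : ((Matrix.of fun (p p' : Fin N × Fin N) =>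
      ∑ a, ∑ b, ∑ e, Cmat P a b * Rinv (b, p.1) (e, p'.1) * R (e, p'.2) (a, p.2) ) : RMat N)
      * rshR R = (Matrix.of fun (p p' : Fin N × Fin N) => if p.1 = p.2 ∧ p'.1 = p'.2 then 1 else 0) := by
    ext ⟨x, x'⟩ ⟨y', y⟩
    have := congrFun (congrFun T (x, y)) (x', y')
    rw [ptr_comp] at this
    simp only [Matrix.mul_apply, Fintype.sum_prod_type, rshR, Matrix.of_apply]
    rw [this]
    simp only [Matrix.one_apply, Prod.mk.injEq, eq_comm (a := y)]
  have st2 := congrArg (· * rshP P) st1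
  simp only [Matrix.mul_assoc, rsh_inv h, Matrix.mul_one] at st2
  have T2 : ∀ x x' z c, ∑ a, ∑ b, ∑ e, Cmat P a b * Rinv (b, x) (e, z) * R (e, c) (a, x')
      = if x = x' then Cmat P c z else 0 := by
    intro x x' z c
    have := congrFun (congrFun st2 (x, x')) (z, c)
    simp only [Matrix.mul_apply, Fintype.sum_prod_type, rshP, Matrix.of_apply] at this
    rw [this]
    by_cases hx : x = x' <;> simp [hx, Cmat]
  have st3 : ((Matrix.of fun (p p' : Fin N × Fin N) => ∑ b, Cmat P p'.2 b * Rinv (b, p.1) (p'.1, p.2) ) : RMat N)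
      * rshR R = (Matrix.of fun (p p' : Fin N × Fin N) => if p.1 = p'.1 then Cmat P p'.2 p.2 else 0) := by
    ext ⟨x, z⟩ ⟨x', c⟩
    rw [Matrix.of_apply, ← T2]
    simp only [Matrix.of_apply, Matrix.mul_apply, Fintype.sum_prod_type, rshR, Finset.sum_mul]
    rw [Finset.sum_comm]
    exact Finset.sum_congr rfl fun a _ => Finset.sum_comm
  have st4 := congrArg (· * rshP P) st3
  simp only [Matrix.mul_assoc, rsh_inv h, Matrix.mul_one] at st4
  have := congrFun (congrFun st4 (x, z)) (v, u)
  rw [Matrix.of_apply] at this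
  simp only at this
  rw [this]
  simp only [Matrix.mul_apply, Fintype.sum_prod_type, rshP]
  simp [mul_comm]

lemma cc_aux_two {R Rinv P : RMat N} (h1 : R * Rinv = 1) (h2 : Rinv * R = 1)
    (hb : IsBraiding R) (h : SkewInv R P) (c x' v u : Fin N) :
    ∑ a, Rinv (u, c) (a, x') * Cmat P a v = ∑ z, Cmat P c z * P (z, u) (x', v) := by
  have T := ptr_conj_two h1 h2 hb h
  have st1 : ((Matrix.of fun (p p' : Fin N × Fin N) =>
      ∑ a, ∑ b, ∑ e, Cmat P a b * R (b, p.1) (e, p'.1) * Rinv (e, p'.2) (a, p.2) ) : RMat N)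
      * rshR R = (Matrix.of fun (p p' : Fin N × Fin N) => if p.1 = p.2 ∧ p'.1 = p'.2 then 1 else 0) := by
    ext ⟨x, x'⟩ ⟨y', y⟩
    have := congrFun (congrFun T (x, y)) (x', y')
    rw [ptr_comp] at this
    simp only [Matrix.mul_apply, Fintype.sum_prod_type, rshR, Matrix.of_apply]
    rw [this]
    simp only [Matrix.one_apply, Prod.mk.injEq, eq_comm (a := y)]
  have st2 := congrArg (· * rshP P) st1
  simp only [Matrix.mul_assoc, rsh_inv h, Matrix.mul_one] at st2
  have T2 : ∀ x x' z c, ∑ a, ∑ b, ∑ e, Cmat P a b * R (b, x) (e, z) * Rinv (e, c) (a, x')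
      = if x = x' then Cmat P c z else 0 := by
    intro x x' z c
    have := congrFun (congrFun st2 (x, x')) (z, c)
    simp only [Matrix.mul_apply, Fintype.sum_prod_type, rshP, Matrix.of_apply] at this
    rw [this]
    by_cases hx : x = x' <;> simp [hx, Cmat]
  have st3 : ((Matrix.of fun (p p' : Fin N × Fin N) => ∑ a, Rinv (p'.2, p.1) (a, p.2) * Cmat P a p'.1 ) : RMat N)
      * rshR R = (Matrix.of fun (p p' : Fin N × Fin N) => if p'.2 = p.2 then Cmat P p.1 p'.1 else 0) := by
    ext ⟨c, x'⟩ ⟨z, x⟩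
    rw [Matrix.of_apply, ← T2]
    simp only [Matrix.of_apply, Matrix.mul_apply, Fintype.sum_prod_type, rshR, Finset.sum_mul]
    conv_lhs => enter [2, b]; rw [Finset.sum_comm]
    rw [Finset.sum_comm]
    refine Finset.sum_congr rfl fun a _ => Finset.sum_congr rfl fun b _ =>
      Finset.sum_congr rfl fun t _ => by ring
  have st4 := congrArg (· * rshP P) st3
  simp only [Matrix.mul_assoc, rsh_inv h, Matrix.mul_one] at st4
  have := congrFun (congrFun st4 (c, x')) (v, u)
  rw [Matrix.of_apply] at this
  simp only at this
  rw [this]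
  simp only [Matrix.mul_apply, Fintype.sum_prod_type, rshP]
  simp

/-- `C ⊗ C`. -/
def ccM (C : Matrix (Fin N) (Fin N) ℂ) : RMat N := fun p p' => C p.1 p'.1 * C p.2 p'.2

lemma cc_comm_inv {R Rinv P : RMat N} (h1 : R * Rinv = 1) (h2 : Rinv * R = 1)
    (hb : IsBraiding R) (h : SkewInv R P) :
    Rinv * ccM (Cmat P) = ccM (Cmat P) * Rinv := by
  ext ⟨u, c⟩ ⟨v, w⟩
  simp only [Matrix.mul_apply, Fintype.sum_prod_type, ccM]
  calc ∑ a, ∑ x', Rinv (u, c) (a, x') * (Cmat P a v * Cmat P x' w)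
      = ∑ x', (∑ a, Rinv (u, c) (a, x') * Cmat P a v) * Cmat P x' w := by
        rw [Finset.sum_comm]; simp only [Finset.sum_mul, mul_assoc]
    _ = ∑ z, Cmat P c z * ∑ x', P (z, u) (x', v) * Cmat P x' w := by
        simp only [cc_aux_two h1 h2 hb h, Finset.sum_mul, Finset.mul_sum]
        rw [Finset.sum_comm]; simp only [mul_assoc]
    _ = _ := by
        simp only [← cc_aux_one h1 h2 hb h, Finset.mul_sum]
        rw [Finset.sum_comm]
        refine Finset.sum_congr rfl fun a _ => Finset.sum_congr rfl fun b _ => by ring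

lemma cc_comm {R Rinv P : RMat N} (h1 : R * Rinv = 1) (h2 : Rinv * R = 1)
    (hb : IsBraiding R) (h : SkewInv R P) :
    R * ccM (Cmat P) = ccM (Cmat P) * R := by
  have e := cc_comm_inv h1 h2 hb h
  calc R * ccM (Cmat P) = R * (ccM (Cmat P) * Rinv) * R := by
        rw [mul_assoc, mul_assoc, h2, mul_one]
    _ = (R * Rinv) * ccM (Cmat P) * R := by rw [← e]; simp only [mul_assoc]
    _ = _ := by rw [h1, one_mul]

end CCPart

/-! ### Local operators on tensor powers -/

section LocPart

variable {N : ℕ}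

open Classical in
/-- Operator `X` acting in the tensor factors `e 0, e 1, …`. -/
def locM {n k : ℕ} {A : Type*} [Ring A] (e : Fin n → Fin k) (X : TMat N n A) : TMat N k A :=
  fun f g => if ∀ j, j ∉ Set.range e → f j = g j then X (f ∘ e) (g ∘ e) else 0

/-- Splitting of multi-indices. -/
def splitE {n k : ℕ} (N : ℕ) (e : Fin n → Fin k) (he : Function.Injective e) :
    (Fin k → Fin N) ≃ (Fin n → Fin N) × ({j // j ∉ Set.range e} → Fin N) :=
  Equiv.ofBijective (fun f => (f ∘ e, fun j => f j.1)) (by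
    classical
    constructor
    · intro f g h
      simp only [Prod.mk.injEq] at h
      ext j
      by_cases hj : j ∈ Set.range e
      · obtain ⟨i, rfl⟩ := hj
        exact congrArg Fin.val (congrFun h.1 i)
      · exact congrArg Fin.val (congrFun h.2 ⟨j, hj⟩)
    · rintro ⟨u, v⟩
      refine ⟨fun j => if hj : j ∈ Set.range e then u hj.choose else v ⟨j, hj⟩, ?_⟩
      simp only [Prod.mk.injEq]
      constructor
      · ext i
        have hi : e i ∈ Set.range e := ⟨i, rfl⟩
        simp only [Function.comp, hi, dif_pos]
        rw [he hi.choose_spec]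
      · ext ⟨j, hj⟩
        simp only [hj, dif_neg, not_false_eq_true])

lemma splitE_apply {n k : ℕ} (e : Fin n → Fin k) (he : Function.Injective e) (f : Fin k → Fin N) :
    splitE N e he f = (f ∘ e, fun j => f j.1) := rfl

lemma locM_eq {n k : ℕ} {A : Type*} [Ring A] (e : Fin n → Fin k) (he : Function.Injective e)
    (X : TMat N n A) :
    locM e X = (Matrix.blockDiagonal (fun _ : ({j // j ∉ Set.range e} → Fin N) => X)).submatrix
      (splitE N e he) (splitE N e he) := by
  ext f g
  rw [Matrix.submatrix_apply, splitE_apply, splitE_apply, Matrix.blockDiagonal_apply, locM]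
  simp only [funext_iff, Subtype.forall]

lemma locM_mul {n k : ℕ} {A : Type*} [Ring A] (e : Fin n → Fin k) (he : Function.Injective e)
    (X Y : TMat N n A) : locM e (X * Y) = locM e X * locM e Y := by
  rw [locM_eq e he, locM_eq e he, locM_eq e he, Matrix.submatrix_mul_equiv,
    ← Matrix.blockDiagonal_mul]

lemma locM_one {n k : ℕ} {A : Type*} [Ring A] (e : Fin n → Fin k) (he : Function.Injective e) :
    locM e (1 : TMat N n A) = 1 := by
  rw [locM_eq e he]
  have : (fun _ : ({j // j ∉ Set.range e} → Fin N) => (1 : TMat N n A)) = 1 := rfl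
  rw [this, Matrix.blockDiagonal_one, Matrix.submatrix_one_equiv]

lemma locM_add {n k : ℕ} {A : Type*} [Ring A] (e : Fin n → Fin k)
    (X Y : TMat N n A) : locM e (X + Y) = locM e X + locM e Y := by
  ext f g
  simp only [locM, Matrix.add_apply]
  split_ifs <;> simp

lemma locM_smul {n k : ℕ} {A : Type*} [Ring A] [Algebra ℂ A] (e : Fin n → Fin k) (c : ℂ)
    (X : TMat N n A) : locM e (c • X) = c • locM e X := by
  ext f g
  simp only [locM, Matrix.smul_apply]
  split_ifs <;> simp

lemma locM_lift {n k : ℕ} (A : Type*) [Ring A] [Algebra ℂ A] (e : Fin n → Fin k)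
    (X : TMat N n ℂ) : liftC A (locM e X) = locM e (liftC A X) := by
  ext f g
  simp only [locM, liftC, Matrix.map_apply]
  split_ifs <;> simp

lemma locM_mul_disj {n n' k : ℕ} {A : Type*} [Ring A] (e : Fin n → Fin k) (e' : Fin n' → Fin k)
    (hd : ∀ i j, e i ≠ e' j) (X : TMat N n A) (Y : TMat N n' A) (f g : Fin k → Fin N) :
    (locM e X * locM e' Y) f g = (locM e (Matrix.of fun u v => X u v * Y (f ∘ e') (g ∘ e')))
      f (fun j => by classical exact if j ∈ Set.range e' then f j else g j) := by
  classical
  rw [Matrix.mul_apply]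
  rw [Finset.sum_eq_single (fun j => if j ∈ Set.range e' then f j else g j)]
  · have h1 : (fun j => if j ∈ Set.range e' then f j else g j) ∘ e = g ∘ e := by
      ext i
      have : e i ∉ Set.range e' := by rintro ⟨j, hj⟩; exact hd i j hj.symm
      simp only [Function.comp, this, if_false]
    have h2 : (fun j => if j ∈ Set.range e' then f j else g j) ∘ e' = f ∘ e' := by
      ext i
      have : e' i ∈ Set.range e' := ⟨i, rfl⟩
      simp only [Function.comp, this, if_true]
    have h3 : ∀ j, j ∉ Set.range e' → (if j ∈ Set.range e' then f j else g j) = g j := by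
      intro j hj; simp only [hj, if_false]
    simp only [locM, h1, h2, Matrix.of_apply]
    rw [if_pos (c := ∀ j, j ∉ Set.range e' → (if j ∈ Set.range e' then f j else g j) = g j) h3]
    split_ifs <;> simp
  · intro h _ hne
    by_contra hcon
    apply hne
    have ha : ∀ j, j ∉ Set.range e → f j = h j := by
      by_contra hh; apply hcon; simp only [locM, hh, if_false, zero_mul]
    have hb : ∀ j, j ∉ Set.range e' → h j = g j := by
      by_contra hh; apply hcon; simp only [locM, hh, if_false, mul_zero]
    ext j
    by_cases hj : j ∈ Set.range e'
    · simp only [hj, if_true]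
      have : j ∉ Set.range e := by
        rintro ⟨i, rfl⟩; obtain ⟨j', hj'⟩ := hj; exact hd i j' hj'.symm
      rw [ha j this]
    · simp only [hj, if_false, hb j hj]
  · intro h; exact absurd (Finset.mem_univ _) h

open Classical in
lemma locM_disj_formula {n n' k : ℕ} {A : Type*} [Ring A] (e : Fin n → Fin k) (e' : Fin n' → Fin k)
    (hd : ∀ i j, e i ≠ e' j) (X : TMat N n A) (Y : TMat N n' A) (f g : Fin k → Fin N) :
    (locM e X * locM e' Y) f g =
      if ∀ j, j ∉ Set.range e → j ∉ Set.range e' → f j = g j then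
        X (f ∘ e) (g ∘ e) * Y (f ∘ e') (g ∘ e') else 0 := by
  rw [locM_mul_disj e e' hd]
  have h1 : (fun j => if j ∈ Set.range e' then f j else g j) ∘ e = g ∘ e := by
    ext i
    have : e i ∉ Set.range e' := by rintro ⟨j, hj⟩; exact hd i j hj.symm
    simp only [Function.comp, this, if_false]
  simp only [locM, h1, Matrix.of_apply]
  have : (∀ j, j ∉ Set.range e → f j = if j ∈ Set.range e' then f j else g j) ↔
      (∀ j, j ∉ Set.range e → j ∉ Set.range e' → f j = g j) := by
    refine forall_congr' fun j => forall_congr' fun _ => ?_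
    split_ifs with h <;> simp [h]
  simp only [this]

lemma locM_commute {n n' k : ℕ} {A : Type*} [Ring A] [Algebra ℂ A] (e : Fin n → Fin k)
    (e' : Fin n' → Fin k) (hd : ∀ i j, e i ≠ e' j) (X : TMat N n ℂ) (Y : TMat N n' A) :
    Commute (liftC A (locM e X)) (locM e' Y) := by
  ext f g
  rw [locM_lift, locM_disj_formula e e' hd, locM_disj_formula e' e (fun i j => (hd j i).symm)]
  simp only [liftC, Matrix.map_apply, Algebra.commutes]
  congr 1
  apply propext
  exact ⟨fun h j a b => h j b a, fun h j a b => h j b a⟩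

/-- The shift embedding. -/
def shE (p k i : ℕ) (h : i + p ≤ k) : Fin p → Fin k := fun j => ⟨i + j, by omega⟩

lemma shE_inj (p k i : ℕ) (h : i + p ≤ k) : Function.Injective (shE p k i h) := by
  intro a b hab
  simp only [shE, Fin.mk.injEq] at hab
  ext; omega

lemma mem_range_shE (p k i : ℕ) (h : i + p ≤ k) (j : Fin k) :
    j ∈ Set.range (shE p k i h) ↔ i ≤ j.val ∧ j.val < i + p := by
  constructor
  · rintro ⟨a, rfl⟩
    simp only [shE]; omega
  · rintro ⟨h1, h2⟩
    refine ⟨⟨j.val - i, by omega⟩, ?_⟩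
    ext; simp only [shE]; omega

lemma embR_loc (p k i a : ℕ) (h : i + p ≤ k) (ha : a + 1 < p) (R : RMat N) :
    embR k R (i + a) = locM (shE p k i h) (embR p R a) := by
  ext f g
  have hk : i + a + 1 < k := by omega
  simp only [embR, locM, hk, ha, dif_pos]
  have e1 : (∀ j : Fin k, j.val ≠ i + a → j.val ≠ i + a + 1 → f j = g j) ↔
      (∀ j, j ∉ Set.range (shE p k i h) → f j = g j) ∧
      (∀ j : Fin p, j.val ≠ a → j.val ≠ a + 1 →
        (f ∘ shE p k i h) j = (g ∘ shE p k i h) j) := by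
    constructor
    · intro H
      refine ⟨fun j hj => ?_, fun j h1 h2 => ?_⟩
      · rw [mem_range_shE] at hj
        exact H j (by omega) (by omega)
      · exact H _ (by simp only [shE]; omega) (by simp only [shE]; omega)
    · rintro ⟨H1, H2⟩ j h1 h2
      by_cases hj : j ∈ Set.range (shE p k i h)
      · obtain ⟨b, rfl⟩ := hj
        exact H2 b (by simp only [shE] at h1; omega) (by simp only [shE] at h2; omega)
      · exact H1 j hj
  by_cases c1 : ∀ j, j ∉ Set.range (shE p k i h) → f j = g j
  · by_cases c2 : ∀ j : Fin p, j.val ≠ a → j.val ≠ a + 1 →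
        (f ∘ shE p k i h) j = (g ∘ shE p k i h) j
    · rw [if_pos (e1.2 ⟨c1, c2⟩), if_pos c1, if_pos c2]
      rfl
    · rw [if_neg (fun H => c2 (e1.1 H).2), if_pos c1, if_neg c2]
  · rw [if_neg (fun H => c1 (e1.1 H).1), if_neg c1]

lemma emb1_loc (p k : ℕ) (h : 0 + p ≤ k) (hp : 0 < p) {A : Type*} [Ring A]
    (X : Matrix (Fin N) (Fin N) A) :
    emb1 k X = locM (shE p k 0 h) (emb1 p X) := by
  ext f g
  have hk : 0 < k := by omega
  simp only [emb1, locM, hk, hp, dif_pos]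
  have e1 : (∀ j : Fin k, j.val ≠ 0 → f j = g j) ↔
      (∀ j, j ∉ Set.range (shE p k 0 h) → f j = g j) ∧
      (∀ j : Fin p, j.val ≠ 0 → (f ∘ shE p k 0 h) j = (g ∘ shE p k 0 h) j) := by
    constructor
    · intro H
      refine ⟨fun j hj => ?_, fun j h1 => ?_⟩
      · rw [mem_range_shE] at hj
        exact H j (by omega)
      · exact H _ (by simp only [shE]; omega)
    · rintro ⟨H1, H2⟩ j h1
      by_cases hj : j ∈ Set.range (shE p k 0 h)
      · obtain ⟨b, rfl⟩ := hj
        exact H2 b (by simp only [shE] at h1; omega)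
      · exact H1 j hj
  by_cases c1 : ∀ j, j ∉ Set.range (shE p k 0 h) → f j = g j
  · by_cases c2 : ∀ j : Fin p, j.val ≠ 0 → (f ∘ shE p k 0 h) j = (g ∘ shE p k 0 h) j
    · rw [if_pos (e1.2 ⟨c1, c2⟩), if_pos c1, if_pos c2]
      rfl
    · rw [if_neg (fun H => c2 (e1.1 H).2), if_pos c1, if_neg c2]
  · rw [if_neg (fun H => c1 (e1.1 H).1), if_neg c1]

lemma embR_out (k i : ℕ) (h : ¬ i + 1 < k) (R : RMat N) : embR k R i = 1 := by
  ext f g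
  simp only [embR, h, dif_neg, not_false_eq_true]

lemma embR_two (R : RMat N) :
    embR 2 R 0 = R.submatrix (finTwoArrowEquiv (Fin N)) (finTwoArrowEquiv (Fin N)) := by
  ext f g
  simp [embR, Fin.forall_fin_succ]

lemma embR_mul (k i : ℕ) (R S : RMat N) : embR k R i * embR k S i = embR k (R * S) i := by
  by_cases h : i + 1 < k
  · have e := fun Z : RMat N => embR_loc 2 k i 0 (by omega) (by omega) Z
    simp only [add_zero] at e
    rw [e, e, e, ← locM_mul _ (shE_inj _ _ _ _), embR_two, embR_two, embR_two,
      Matrix.submatrix_mul_equiv]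
  · simp only [embR_out k i h, one_mul]

lemma embR_one (k i : ℕ) : embR k (1 : RMat N) i = 1 := by
  by_cases h : i + 1 < k
  · have e := fun Z : RMat N => embR_loc 2 k i 0 (by omega) (by omega) Z
    simp only [add_zero] at e
    rw [e, embR_two, Matrix.submatrix_one_equiv, locM_one _ (shE_inj _ _ _ _)]
  · simp only [embR_out k i h]

lemma embR_hecke (k i : ℕ) (h : i + 1 < k) {R : RMat N} {q : ℂ} (hq0 : q ≠ 0)
    (hH : HeckeCond R q) :
    embR k R i * embR k R i = 1 + (q - q⁻¹) • embR k R i := by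
  have hR : R * R = 1 + (q - q⁻¹) • R := by
    unfold HeckeCond at hH
    simp only [sub_mul, mul_add, smul_mul_assoc, mul_smul_comm, one_mul, mul_one] at hH
    rw [smul_sub, smul_smul, inv_mul_cancel₀ hq0, one_smul] at hH
    have : R * R = 1 + (q - q⁻¹) • R - ((1 - q⁻¹ • R) + (q • R - R * R)) := by
      rw [sub_smul]; abel
    rwa [hH, sub_zero] at this
  have e := fun Z : RMat N => embR_loc 2 k i 0 (by omega) (by omega) Z
  simp only [add_zero] at e
  rw [embR_mul, hR, e, e, embR_two, embR_two, Matrix.submatrix_add, Matrix.submatrix_smul]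
  simp only [Pi.add_apply, Pi.smul_apply]
  rw [Matrix.submatrix_one_equiv, locM_add, locM_smul, locM_one _ (shE_inj _ _ _ _)]

lemma embR_braid (k i : ℕ) (h : i + 2 < k) {R : RMat N} (hb : IsBraiding R) :
    embR k R i * embR k R (i + 1) * embR k R i
      = embR k R (i + 1) * embR k R i * embR k R (i + 1) := by
  have e0 := embR_loc 3 k i 0 (by omega) (by omega) R
  have e1 := embR_loc 3 k i 1 (by omega) (by omega) R
  simp only [add_zero] at e0
  unfold IsBraiding at hb
  rw [e0, e1]
  simp only [← locM_mul _ (shE_inj _ _ _ _)]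
  rw [hb]

lemma liftC_mul {k : ℕ} (A : Type*) [Ring A] [Algebra ℂ A] (X Y : TMat N k ℂ) :
    liftC A (X * Y) = liftC A X * liftC A Y := by
  unfold liftC
  exact Matrix.map_mul

lemma liftC_one {k : ℕ} (A : Type*) [Ring A] [Algebra ℂ A] :
    liftC A (1 : TMat N k ℂ) = 1 := by
  unfold liftC
  exact Matrix.map_one _ (map_zero _) (map_one _)

lemma liftC_smul {k : ℕ} (A : Type*) [Ring A] [Algebra ℂ A] (c : ℂ) (X : TMat N k ℂ) :
    liftC A (c • X) = c • liftC A X := by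
  ext f g
  simp only [liftC, Matrix.map_apply, Matrix.smul_apply, smul_eq_mul, map_mul]
  rw [Algebra.smul_def]

lemma liftC_id {k : ℕ} (X : TMat N k ℂ) : liftC ℂ X = X := by
  ext f g
  simp [liftC]

lemma embR_commute (k i j : ℕ) (h : i + 2 ≤ j) (R S : RMat N) :
    Commute (embR k R i) (embR k S j) := by
  by_cases hj : j + 1 < k
  · have e0 := embR_loc 2 k i 0 (by omega) (by omega) R
    have e1 := embR_loc 2 k j 0 (by omega) (by omega) S
    simp only [add_zero] at e0 e1
    have := locM_commute (A := ℂ) (shE 2 k i (by omega)) (shE 2 k j (by omega)) (by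
      intro a b hab
      simp only [shE, Fin.mk.injEq] at hab
      omega) (embR 2 R 0) (embR 2 S 0)
    rwa [liftC_id, ← e0, ← e1] at this
  · rw [embR_out k j hj]; exact Commute.one_right _

lemma embR_emb1_commute (k j : ℕ) (h : 1 ≤ j) {A : Type*} [Ring A] [Algebra ℂ A] (R : RMat N)
    (X : Matrix (Fin N) (Fin N) A) :
    Commute (liftC A (embR k R j)) (emb1 k X) := by
  by_cases hj : j + 1 < k
  · have e0 := embR_loc 2 k j 0 (by omega) (by omega) R
    simp only [add_zero] at e0
    rw [e0, emb1_loc 1 k (by omega) (by omega)]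
    exact locM_commute _ _ (by
      intro a b hab
      simp only [shE, Fin.mk.injEq] at hab
      omega) _ _
  · rw [embR_out k j hj, liftC_one]; exact Commute.one_left _

lemma emb1_mul (k : ℕ) (hk : 1 ≤ k) {A : Type*} [Ring A] (X Y : Matrix (Fin N) (Fin N) A) :
    emb1 k (X * Y) = emb1 k X * emb1 k Y := by
  have e : ∀ Z : Matrix (Fin N) (Fin N) A, emb1 1 Z
      = Z.submatrix (Equiv.funUnique (Fin 1) (Fin N)) (Equiv.funUnique (Fin 1) (Fin N)) := by
    intro Z; ext f g
    simp [emb1]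
  rw [emb1_loc 1 k (by omega) (by omega) X, emb1_loc 1 k (by omega) (by omega) Y,
    emb1_loc 1 k (by omega) (by omega) (X * Y), ← locM_mul _ (shE_inj _ _ _ _), e, e, e,
    Matrix.submatrix_mul_equiv]

/-- `C^{⊗k}`. -/
def cTen {N : ℕ} (C : Matrix (Fin N) (Fin N) ℂ) (k : ℕ) : TMat N k ℂ :=
  fun f g => ∏ j, C (f j) (g j)

lemma cTen_comm_loc {n k : ℕ} (C : Matrix (Fin N) (Fin N) ℂ) (e : Fin n → Fin k)
    (he : Function.Injective e) (X : TMat N n ℂ) (hX : Commute (cTen C n) X) :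
    Commute (cTen C k) (locM e X) := by
  classical
  have h1 : locM e X = (Matrix.kroneckerMap (· * ·) X
      (1 : Matrix ({j // j ∉ Set.range e} → Fin N) ({j // j ∉ Set.range e} → Fin N) ℂ)).submatrix
      (splitE N e he) (splitE N e he) := by
    rw [locM_eq e he, Matrix.kronecker_one]
  have h2 : cTen C k = (Matrix.kroneckerMap (· * ·) (cTen C n)
      (Matrix.of fun (u v : {j // j ∉ Set.range e} → Fin N) => ∏ j, C (u j) (v j))).submatrix
      (splitE N e he) (splitE N e he) := by
    ext f g
    rw [Matrix.submatrix_apply, splitE_apply, splitE_apply, Matrix.kroneckerMap_apply]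
    simp only [cTen, Matrix.of_apply, Function.comp]
    rw [← Fintype.prod_subtype_mul_prod_subtype (fun j => j ∈ Set.range e)
      (fun j => C (f j) (g j))]
    congr 1
    symm
    refine Finset.prod_bij (fun i _ => ⟨e i, i, rfl⟩) (fun _ _ => @Finset.mem_univ _ (_) _) ?_ ?_
      (fun i _ => rfl)
    · intro a _ b _ hab
      exact he (congrArg Subtype.val hab)
    · rintro ⟨_, i, rfl⟩ _
      exact ⟨i, Finset.mem_univ _, rfl⟩
  rw [h1, h2]
  unfold Commute SemiconjBy
  rw [Matrix.submatrix_mul_equiv, Matrix.submatrix_mul_equiv, ← Matrix.mul_kronecker_mul,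
    ← Matrix.mul_kronecker_mul, hX.eq, Matrix.mul_one, Matrix.one_mul]

lemma cTen_comm_embR (k i : ℕ) (C : Matrix (Fin N) (Fin N) ℂ) (R : RMat N)
    (h : R * ccM C = ccM C * R) : Commute (cTen C k) (embR k R i) := by
  by_cases hi : i + 1 < k
  · have e0 := embR_loc 2 k i 0 (by omega) (by omega) R
    simp only [add_zero] at e0
    rw [e0]
    refine cTen_comm_loc C _ (shE_inj _ _ _ _) _ ?_
    have : cTen C 2 = (ccM C).submatrix (finTwoArrowEquiv (Fin N)) (finTwoArrowEquiv (Fin N)) := by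
      ext f g
      simp [cTen, ccM]
    rw [this, embR_two]
    unfold Commute SemiconjBy
    rw [Matrix.submatrix_mul_equiv, Matrix.submatrix_mul_equiv, h]
  · rw [embR_out k i hi]; exact Commute.one_right _

lemma rTr_eq {k : ℕ} {A : Type*} [Ring A] [Algebra ℂ A] (C : Matrix (Fin N) (Fin N) ℂ)
    (X : TMat N k A) : rTr C X = Matrix.trace (liftC A (cTen C k) * X) := by
  simp only [rTr, Matrix.trace, Matrix.diag, Matrix.mul_apply, liftC, Matrix.map_apply, cTen,
    Algebra.smul_def]

lemma trace_lift_comm {k : ℕ} {A : Type*} [Ring A] [Algebra ℂ A] (S : TMat N k ℂ)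
    (X : TMat N k A) : Matrix.trace (liftC A S * X) = Matrix.trace (X * liftC A S) := by
  simp only [Matrix.trace, Matrix.diag, Matrix.mul_apply, liftC, Matrix.map_apply]
  rw [Finset.sum_comm]
  simp only [Algebra.commutes]

lemma rTr_cyc {k : ℕ} {A : Type*} [Ring A] [Algebra ℂ A] (C : Matrix (Fin N) (Fin N) ℂ)
    (S : TMat N k ℂ) (h : Commute (cTen C k) S) (X : TMat N k A) :
    rTr C (liftC A S * X) = rTr C (X * liftC A S) := by
  rw [rTr_eq, rTr_eq, ← mul_assoc, ← liftC_mul, h.eq, liftC_mul, mul_assoc, trace_lift_comm,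
    mul_assoc]

lemma rTr_smul {k : ℕ} {A : Type*} [Ring A] [Algebra ℂ A] (C : Matrix (Fin N) (Fin N) ℂ)
    (c : ℂ) (X : TMat N k A) : rTr C (c • X) = c • rTr C X := by
  rw [rTr_eq, rTr_eq, Matrix.mul_smul, Matrix.trace_smul]

lemma Ssym_eq_symA (k : ℕ) (R : RMat N) (q : ℂ) :
    ∀ n, Ssym k R q n = symA (fun i => embR k R i) q n
  | 0 => rfl
  | 1 => rfl
  | n + 2 => by rw [Ssym, symA, Ssym_eq_symA k R q (n + 1)]

lemma symA_commute_of {B : Type*} [Ring B] [Algebra ℂ B] (r : ℕ → B) (q : ℂ) (c : B)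
    (h : ∀ i, Commute c (r i)) : ∀ n, Commute c (symA r q n)
  | 0 => Commute.one_right _
  | 1 => by rw [symA]; exact Commute.one_right _
  | n + 2 => by
    have ih := symA_commute_of r q c h (n + 1)
    rw [symA]
    refine Commute.smul_right ((ih.mul_right ?_).mul_right ih) _
    exact ((Commute.one_right _).smul_right _).add_right ((h n).smul_right _)

/-- The lifted `R_i` as units. -/
def rUnit (k : ℕ) (R Rinv : RMat N) (h1 : R * Rinv = 1) (h2 : Rinv * R = 1)
    (A : Type*) [Ring A] [Algebra ℂ A] (i : ℕ) : (TMat N k A)ˣ where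
  val := liftC A (embR k R i)
  inv := liftC A (embR k Rinv i)
  val_inv := by rw [← liftC_mul, embR_mul, h1, embR_one, liftC_one]
  inv_val := by rw [← liftC_mul, embR_mul, h2, embR_one, liftC_one]

section
variable (k : ℕ) (R Rinv : RMat N) (h1 : R * Rinv = 1) (h2 : Rinv * R = 1)
    {A : Type*} [Ring A] [Algebra ℂ A]

lemma copyX_eq (X : Matrix (Fin N) (Fin N) A) :
    ∀ i, copyX k R Rinv X i = cpA (rUnit k R Rinv h1 h2 A) (emb1 k X) i
  | 0 => rfl
  | i + 1 => by rw [copyX, cpA, copyX_eq X i]; rfl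

lemma upChain_eq (X : Matrix (Fin N) (Fin N) A) (n : ℕ) :
    upChain k R Rinv X n = upA (rUnit k R Rinv h1 h2 A) (emb1 k X) n := by
  induction n with
  | zero => simp [upChain, upA]
  | succ n ih =>
    rw [upA, ← ih, ← copyX_eq]
    simp [upChain, List.range_succ]

lemma downChain_eq (X : Matrix (Fin N) (Fin N) A) (n : ℕ) :
    downChain k R Rinv X n = dnA (rUnit k R Rinv h1 h2 A) (emb1 k X) n := by
  induction n with
  | zero => simp [downChain, dnA]
  | succ n ih =>
    rw [dnA, ← ih, ← copyX_eq]
    simp [downChain, List.range_succ]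

lemma capChainS_eq {q : ℂ} (hq0 : q ≠ 0) (hq : q - q⁻¹ ≠ 0) (X : Matrix (Fin N) (Fin N) A)
    (n : ℕ) :
    capChainS k R Rinv q X n = capA (rUnit k R Rinv h1 h2 A) q (emb1 k X) n := by
  induction n with
  | zero => simp [capChainS, capA]
  | succ n ih =>
    rw [capA, ← ih, ← copyX_eq, lamA_eq hq0 hq]
    simp only [capChainS, List.range_succ, List.map_append, List.prod_append, List.map_cons,
      List.map_nil, List.prod_cons, List.prod_nil, mul_one]

end

end LocPart

/-- generalized quantum Capelli identity, symmetric form: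
`⟨S^(k) L_{1̄}(L_{2̄}−q⁻¹I)⋯(L_{k̄}−q^{−(k−1)}(k−1)_q I)⟩_{1…k}
  = q^{−k(k−1)} ⟨S^(k) M_{1̄}⋯M_{k̄} D_{k̄}⋯D_{1̄}⟩_{1…k}`, with `L = MD`. -/
theorem statement5 {N : ℕ} (R Rinv Ψ : RMat N) (q : ℂ)
    (hq0 : q ≠ 0) (hq1 : q ≠ 1) (hqm1 : q ≠ -1)
    (hinv : R * Rinv = 1) (hinv' : Rinv * R = 1)
    (hbr : IsBraiding R) (hH : HeckeCond R q) (hΨ : SkewInv R Ψ)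
    {A : Type _} [Ring A] [Algebra ℂ A]
    (M D : Matrix (Fin N) (Fin N) A)
    (hRE : RERel R M) (hDD : DDRel Rinv D) (hperm : PermRel R Rinv M D) :
    ∀ k : ℕ, 1 ≤ k → (∀ j : ℕ, 2 ≤ j → j ≤ k → qNum q j ≠ 0) →
      rTr (Cmat Ψ) (liftC A (Ssym k R q k) * capChainS k R Rinv q (M * D) k)
        = (q⁻¹ ^ (k * (k - 1))) •
            rTr (Cmat Ψ)
              (liftC A (Ssym k R q k) * upChain k R Rinv M k * downChain k R Rinv D k) := by
  intro k hk hn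
  have hq : q - q⁻¹ ≠ 0 := by
    intro h
    have h2 : q * q = 1 := by
      have : q = q⁻¹ := sub_eq_zero.1 h
      nth_rewrite 2 [this]
      exact mul_inv_cancel₀ hq0
    rcases mul_self_eq_one_iff.1 h2 with h | h
    · exact hq1 h
    · exact hqm1 h
  have hS : Commute (cTen (Cmat Ψ) k) (Ssym k R q k) := by
    rw [Ssym_eq_symA]
    exact symA_commute_of _ q _
      (fun i => cTen_comm_embR k i _ R (cc_comm hinv hinv' hbr hΨ)) k
  have hT : ∀ i, i + 1 < k → embR k R i * Ssym k R q k = q • Ssym k R q k := by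
    obtain ⟨n, rfl⟩ : ∃ n, k = n + 1 := ⟨k - 1, by omega⟩
    intro i hi
    rw [Ssym_eq_symA]
    exact (symA_props hq0 hq (n + 1) (fun i => embR (n + 1) R i)
      (fun i j h => embR_commute _ i j h R R)
      (fun i h => embR_braid _ i h hbr)
      (fun i h => embR_hecke _ i h hq0 hH) hn n le_rfl).1 i (by omega)
  have e1 : ∀ h : 0 + 2 ≤ k, ∀ Z : RMat N, embR k Z 0 = locM (shE 2 k 0 h) (embR 2 Z 0) :=
    fun h Z => embR_loc 2 k 0 0 h (by omega) Z
  have e2 : ∀ h : 0 + 2 ≤ k, ∀ Z : Matrix (Fin N) (Fin N) A,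
      emb1 k Z = locM (shE 2 k 0 h) (emb1 2 Z) :=
    fun h Z => emb1_loc 2 k h (by omega) Z
  have main := capelli_abs hq0 k (rUnit k R Rinv hinv hinv' A)
    (fun i j h => by
      show Commute (liftC A (embR k R i)) (liftC A (embR k R j))
      unfold Commute SemiconjBy
      rw [← liftC_mul, ← liftC_mul, (embR_commute k i j h R R).eq])
    (fun i h => by
      show liftC A (embR k R i) * liftC A (embR k R (i + 1)) * liftC A (embR k R i)
        = liftC A (embR k R (i + 1)) * liftC A (embR k R i) * liftC A (embR k R (i + 1))
      simp only [← liftC_mul]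
      rw [embR_braid k i h hbr])
    (emb1 k M) (emb1 k D)
    (fun j hj => embR_emb1_commute k j hj R M)
    (fun j hj => embR_emb1_commute k j hj R D)
    (fun h => by
      show emb1 k D * liftC A (embR k R 0) * emb1 k M = liftC A (embR k R 0) * emb1 k M *
        liftC A (embR k Rinv 0) * emb1 k D * liftC A (embR k Rinv 0) + 1
      have h' : 0 + 2 ≤ k := by omega
      have hi := shE_inj 2 k 0 h'
      rw [e1 h', e1 h', e2 h', e2 h']
      simp only [locM_lift, ← locM_mul _ hi]
      unfold PermRel at hperm
      rw [hperm, locM_add, locM_one _ hi])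
    (fun h => by
      show liftC A (embR k Rinv 0) * emb1 k D * liftC A (embR k Rinv 0) * emb1 k D
        = emb1 k D * liftC A (embR k Rinv 0) * emb1 k D * liftC A (embR k Rinv 0)
      have h' : 0 + 2 ≤ k := by omega
      have hi := shE_inj 2 k 0 h'
      rw [e1 h', e2 h']
      simp only [locM_lift, ← locM_mul _ hi]
      unfold DDRel at hDD
      rw [hDD])
    k le_rfl (liftC A (Ssym k R q k))
    (fun i hi => by
      show liftC A (embR k R i) * _ = _
      rw [← liftC_mul, hT i hi, liftC_smul])
  rw [mul_assoc, rTr_cyc _ _ hS, rTr_cyc _ _ hS, capChainS_eq k R Rinv hinv hinv' hq0 hq,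
    emb1_mul k hk, main, upChain_eq k R Rinv hinv hinv', downChain_eq k R Rinv hinv hinv', rTr_smul]
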